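/- The infinite series identity 10π/√3 = Σ_{j=0}^{∞} (1/4)^j · (2/3)_j / (11/6)_j · (27j² + 42j + 17) / ((j + 1)(3j + 1)) holds, where the sum is over natural numbers j and all quantities are real numbers. -/

import Mathlib

noncomputable def risingFactorial (a : ℝ) (k : ℕ) : ℝ := ∏ i ∈ Finset.range k, (a + i)

open Filter Topology

/-- Ratio of rising factorials `(4/3)_n (2/3)_{n+j} / (2/3)_{2n+j}`. -/
noncomputable def wzE (n j : ℕ) : ℝ :=
  risingFactorial (2/3) (n + j) * risingFactorial (4/3) n / risingFactorial (2/3) (2 * n + j)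

noncomputable def wzA (n j : ℕ) : ℝ :=
  wzE n j * (17/9 + 14/3 * (n:ℝ) + 2 * j + 3 * (n:ℝ)^2 + 3 * (n:ℝ) * j + (j:ℝ)^2) /
    ((3 * ((n:ℝ) + j) + 1) * ((n:ℝ) + 1) * (2/3 + 2 * n + j) * (5/3 + 2 * n + j))

noncomputable def wzB (n j : ℕ) : ℝ :=
  wzE n j / ((3 * ((n:ℝ) + j) + 1) * (2/3 + 2 * n + j))

lemma rf_succ (a : ℝ) (k : ℕ) : risingFactorial a (k + 1) = risingFactorial a k * (a + k) := by
  simp [risingFactorial, Finset.prod_range_succ]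

lemma rf_pos (a : ℝ) (ha : 0 < a) (k : ℕ) : 0 < risingFactorial a k := by
  unfold risingFactorial
  exact Finset.prod_pos fun i _ => by positivity

lemma wzE_pos (n j : ℕ) : 0 < wzE n j := by
  unfold wzE
  have h1 := rf_pos (2/3) (by norm_num) (n + j)
  have h2 := rf_pos (4/3) (by norm_num) n
  have h3 := rf_pos (2/3) (by norm_num) (2 * n + j)
  positivity

lemma wzE_succ_left (n j : ℕ) : wzE (n + 1) j =
    wzE n j * ((2/3 + (n + j)) * (4/3 + n) / ((2/3 + 2 * n + j) * (5/3 + 2 * n + j))) := by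
  have h3 := rf_pos (2/3) (by norm_num) (2 * n + j)
  unfold wzE
  rw [show n + 1 + j = n + j + 1 by ring, show 2 * (n + 1) + j = 2 * n + j + 1 + 1 by ring]
  simp only [rf_succ]
  push_cast
  rw [show (2/3 + (2 * (n:ℝ) + j)) = 2/3 + 2 * n + j by ring,
    show (2/3 + (2 * (n:ℝ) + j + 1)) = 5/3 + 2 * n + j by ring]
  field_simp

lemma wzE_succ_right (n j : ℕ) : wzE n (j + 1) =
    wzE n j * ((2/3 + (n + j)) / (2/3 + 2 * n + j)) := by
  have h3 := rf_pos (2/3) (by norm_num) (2 * n + j)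
  unfold wzE
  rw [show n + (j + 1) = n + j + 1 by ring, show 2 * n + (j + 1) = 2 * n + j + 1 by ring]
  simp only [rf_succ]
  push_cast
  rw [show (2/3 + (2 * (n:ℝ) + j)) = 2/3 + 2 * n + j by ring]
  field_simp

lemma wz (n j : ℕ) : wzA n j + wzB (n + 1) j = wzB n j + wzA n (j + 1) := by
  unfold wzA wzB
  rw [wzE_succ_left, wzE_succ_right]
  have := wzE_pos n j
  generalize wzE n j = e at *
  push_cast
  have hx : (0:ℝ) ≤ n := by positivity
  have hy : (0:ℝ) ≤ j := by positivity
  generalize (n:ℝ) = x at *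
  generalize (j:ℝ) = y at *
  have h1 : 3 * (x + y) + 1 ≠ 0 := by positivity
  have h2 : 3 * (x + 1 + y) + 1 ≠ 0 := by positivity
  have h3 : 2/3 + 2 * x + y ≠ 0 := by positivity
  have h4 : 5/3 + 2 * x + y ≠ 0 := by positivity
  have h5 : 8/3 + 2 * x + y ≠ 0 := by positivity
  have h6 : x + 1 ≠ 0 := by positivity
  rw [show 2/3 + 2 * (x + 1) + y = 8/3 + 2 * x + y by ring,
    show 3 * (x + (y + 1)) + 1 = 3 * (x + 1 + y) + 1 by ring,
    show 2/3 + 2 * x + (y + 1) = 5/3 + 2 * x + y by ring,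
    show 5/3 + 2 * x + (y + 1) = 8/3 + 2 * x + y by ring]
  field_simp
  ring

lemma wz_sum (N J : ℕ) : ∑ n ∈ Finset.range N, wzA n 0 + ∑ j ∈ Finset.range J, wzB N j =
    ∑ j ∈ Finset.range J, wzB 0 j + ∑ n ∈ Finset.range N, wzA n J := by
  induction J with
  | zero => simp
  | succ J ih =>
    have key : ∀ N, ∑ n ∈ Finset.range N, wzA n J + wzB N J =
        wzB 0 J + ∑ n ∈ Finset.range N, wzA n (J + 1) := by
      intro N
      induction N with
      | zero => simp
      | succ N ih2 =>
        rw [Finset.sum_range_succ, Finset.sum_range_succ]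
        linarith [wz N J]
    rw [Finset.sum_range_succ, Finset.sum_range_succ]
    linarith [key N]

lemma wzE_zero (j : ℕ) : wzE 0 j = 1 := by
  have h3 := rf_pos (2/3) (by norm_num) j
  simp only [wzE, Nat.mul_zero, Nat.zero_add]
  simp only [risingFactorial, Finset.range_zero, Finset.prod_empty, mul_one] at *
  exact div_self h3.ne'

lemma wzE_le_one (n j : ℕ) : wzE n j ≤ 1 := by
  induction n with
  | zero => rw [wzE_zero]
  | succ n ih =>
    rw [wzE_succ_left]
    have : ((2/3 + ((n:ℝ) + j)) * (4/3 + n) / ((2/3 + 2 * n + j) * (5/3 + 2 * n + j))) ≤ 1 := by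
      rw [div_le_one (by positivity)]
      apply mul_le_mul <;> first | positivity | (have : (0:ℝ) ≤ n := by positivity
                                                 have : (0:ℝ) ≤ j := by positivity
                                                 linarith)
    have h0 := wzE_pos n j
    have : 0 ≤ ((2/3 + ((n:ℝ) + j)) * (4/3 + n) / ((2/3 + 2 * n + j) * (5/3 + 2 * n + j))) := by
      positivity
    nlinarith

lemma wzA_nonneg (n j : ℕ) : 0 ≤ wzA n j := by
  have := wzE_pos n j
  unfold wzA
  positivity

lemma wzB_nonneg (n j : ℕ) : 0 ≤ wzB n j := by
  have := wzE_pos n j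
  unfold wzB
  positivity

lemma wzA_le (n j : ℕ) : wzA n j ≤ 5 / (j + 1) := by
  have h0 := wzE_pos n j
  have h1 := wzE_le_one n j
  unfold wzA
  rw [div_le_div_iff₀ (by positivity) (by positivity)]
  generalize wzE n j = e at *
  have hx : (0:ℝ) ≤ n := by positivity
  have hy : (0:ℝ) ≤ j := by positivity
  generalize (n:ℝ) = x at *
  generalize (j:ℝ) = y at *
  calc e * (17/9 + 14/3 * x + 2 * y + 3 * x^2 + 3 * x * y + y^2) * (y + 1)
      ≤ 1 * (17/9 + 14/3 * x + 2 * y + 3 * x^2 + 3 * x * y + y^2) * (y + 1) := by gcongr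
    _ ≤ 1 * (5 * ((2/3 + 2 * x + y) * (5/3 + 2 * x + y))) * ((3 * (x + y) + 1) * (x + 1)) := by
        gcongr
        · nlinarith [mul_nonneg hx hy, mul_nonneg hx hx, mul_nonneg hy hy]
        · nlinarith [mul_nonneg hx hy, mul_nonneg hx hx, mul_nonneg hy hy]
    _ = _ := by ring

lemma wzB_le (n j : ℕ) : wzB (n + 1) j ≤ 1 / ((n:ℝ) + 1 + j) - 1 / ((n:ℝ) + 1 + (j + 1 : ℕ)) := by
  have h0 := wzE_pos (n + 1) j
  have h1 := wzE_le_one (n + 1) j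
  unfold wzB
  generalize wzE (n + 1) j = e at *
  push_cast
  rw [div_sub_div _ _ (by positivity) (by positivity),
    div_le_div_iff₀ (by positivity) (by positivity)]
  have hx : (0:ℝ) ≤ n := by positivity
  have hy : (0:ℝ) ≤ j := by positivity
  generalize (n:ℝ) = x at *
  generalize (j:ℝ) = y at *
  calc e * ((x + 1 + y) * (x + 1 + (y + 1))) ≤ 1 * ((x + 1 + y) * (x + 1 + (y + 1))) := by gcongr
    _ ≤ 1 * ((3 * (x + 1 + y) + 1) * (2/3 + 2 * (x + 1) + y)) := by
        have a1 : x + 1 + y ≤ 3 * (x + 1 + y) + 1 := by linarith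
        have a2 : x + 1 + (y + 1) ≤ 2/3 + 2 * (x + 1) + y := by linarith
        rw [one_mul, one_mul]
        exact mul_le_mul a1 a2 (by positivity) (by positivity)
    _ = _ := by ring

lemma wzB_sum_le (n J : ℕ) : ∑ j ∈ Finset.range J, wzB (n + 1) j ≤ 1 / ((n:ℝ) + 1) := by
  calc _ ≤ ∑ j ∈ Finset.range J, (1 / ((n:ℝ) + 1 + j) - 1 / ((n:ℝ) + 1 + (j + 1 : ℕ))) :=
        Finset.sum_le_sum fun j _ => wzB_le n j
    _ = 1 / ((n:ℝ) + 1 + (0:ℕ)) - 1 / ((n:ℝ) + 1 + J) :=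
        Finset.sum_range_sub' (fun j : ℕ => 1 / ((n:ℝ) + 1 + j)) J
    _ ≤ _ := by
        have : 0 ≤ 1 / ((n:ℝ) + 1 + J) := by positivity
        simp at *
        linarith

/-- The slowly convergent series. -/
lemma slow : Tendsto (fun J : ℕ => ∑ j ∈ Finset.range J, wzB 0 j) atTop
    (𝓝 (Real.pi / Real.sqrt 3)) := by
  have hmem : ((1/3 : ℝ) : ℂ) ∈ Complex.integerComplement := by
    rw [Complex.mem_integerComplement_iff]
    rintro ⟨m, hm⟩
    have h1 : (m : ℝ) = 1/3 := by exact_mod_cast hm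
    have h2 : (3 * m : ℝ) = 1 := by linarith
    have h3 : 3 * m = 1 := by exact_mod_cast h2
    omega
  have h := tendsto_logDeriv_euler_cot_sub hmem
  have e1 : ((Real.pi : ℂ) * Complex.cot (Real.pi * ((1/3 : ℝ) : ℂ)) - 1 / ((1/3 : ℝ) : ℂ)) =
      ((Real.pi * (Real.cos (Real.pi / 3) / Real.sin (Real.pi / 3)) - 3 : ℝ) : ℂ) := by
    rw [Complex.cot]
    rw [show (Real.pi : ℂ) * ((1/3 : ℝ) : ℂ) = ((Real.pi / 3 : ℝ) : ℂ) by push_cast; ring]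
    push_cast
    norm_num
  have e2 : ∀ n : ℕ, ∑ j ∈ Finset.range n, cotTerm ((1/3 : ℝ) : ℂ) j =
      ((∑ j ∈ Finset.range n, (1 / (1/3 - ((j:ℝ) + 1)) + 1 / (1/3 + ((j:ℝ) + 1))) : ℝ) : ℂ) := by
    intro n
    push_cast
    rfl
  rw [e1] at h
  simp_rw [e2] at h
  have h' := (Complex.continuous_re.tendsto _).comp h
  simp only [Function.comp_def, Complex.ofReal_re] at h'
  have hz : Tendsto (fun J : ℕ => 1 / ((J:ℝ) + 1/3)) atTop (𝓝 0) := by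
    simp_rw [one_div]
    exact (tendsto_atTop_add_const_right _ _ tendsto_natCast_atTop_atTop).inv_tendsto_atTop
  have e3 : ∀ J : ℕ, ∑ j ∈ Finset.range J, wzB 0 j =
      ∑ j ∈ Finset.range J, (1 / (1/3 - ((j:ℝ) + 1)) + 1 / (1/3 + ((j:ℝ) + 1))) + 3
        - 1 / ((J:ℝ) + 1/3) := by
    intro J
    induction J with
    | zero => norm_num
    | succ J ih =>
      rw [Finset.sum_range_succ, Finset.sum_range_succ, ih]
      unfold wzB
      rw [wzE_zero, show (1/3 - ((J:ℝ) + 1)) = -(2/3 + J) by ring]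
      push_cast
      rw [show (2/3 + 2 * (0:ℝ) + J) = 2/3 + J by ring, zero_add]
      field_simp
      ring
  simp_rw [e3]
  have := (h'.add_const 3).sub hz
  convert this using 2
  rw [Real.cos_pi_div_three, Real.sin_pi_div_three]
  field_simp
  ring

lemma hasSum_A : HasSum (fun n => wzA n 0) (Real.pi / Real.sqrt 3) := by
  rw [hasSum_iff_tendsto_nat_of_nonneg (fun n => wzA_nonneg n 0)]
  rw [← tendsto_add_atTop_iff_nat 1]
  have hs : Tendsto (fun N : ℕ => (N + 1) ^ 2) atTop atTop :=
    tendsto_atTop_mono (fun N => by show N ≤ _; nlinarith) tendsto_id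
  have h1 := slow.comp hs
  have hz : Tendsto (fun N : ℕ => 1 / ((N:ℝ) + 1)) atTop (𝓝 0) :=
    tendsto_one_div_add_atTop_nhds_zero_nat
  have hlow : Tendsto (fun N : ℕ => ∑ j ∈ Finset.range ((N + 1)^2), wzB 0 j - 1 / ((N:ℝ) + 1))
      atTop (𝓝 (Real.pi / Real.sqrt 3)) := by
    simpa using h1.sub hz
  have hup : Tendsto (fun N : ℕ => ∑ j ∈ Finset.range ((N + 1)^2), wzB 0 j + 5 * (1 / ((N:ℝ) + 1)))
      atTop (𝓝 (Real.pi / Real.sqrt 3)) := by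
    simpa using h1.add (hz.const_mul 5)
  refine tendsto_of_tendsto_of_tendsto_of_le_of_le hlow hup ?_ ?_
  · intro N
    have e := wz_sum (N + 1) ((N + 1)^2)
    have b := wzB_sum_le N ((N + 1)^2)
    have c : 0 ≤ ∑ n ∈ Finset.range (N + 1), wzA n ((N + 1)^2) :=
      Finset.sum_nonneg fun n _ => wzA_nonneg n _
    simp only
    linarith
  · intro N
    have e := wz_sum (N + 1) ((N + 1)^2)
    have b : 0 ≤ ∑ j ∈ Finset.range ((N + 1)^2), wzB (N + 1) j :=
      Finset.sum_nonneg fun n _ => wzB_nonneg _ _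
    have c : ∑ n ∈ Finset.range (N + 1), wzA n ((N + 1)^2) ≤ 5 * (1 / ((N:ℝ) + 1)) := by
      calc _ ≤ ∑ n ∈ Finset.range (N + 1), 5 / ((((N + 1)^2 : ℕ) : ℝ) + 1) :=
            Finset.sum_le_sum fun n _ => wzA_le n _
        _ ≤ _ := by
            rw [Finset.sum_const, Finset.card_range, nsmul_eq_mul, mul_one_div,
              mul_div_assoc', div_le_div_iff₀ (by positivity) (by positivity)]
            push_cast
            nlinarith
    simp only
    linarith

lemma E_eq (n : ℕ) : wzE n 0 / ((2/3 + 2 * n) * (5/3 + 2 * n)) =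
    9 / 10 * ((1/4 : ℝ) ^ n * risingFactorial (2/3) n / risingFactorial (11/6) n) := by
  induction n with
  | zero => rw [wzE_zero]; norm_num [risingFactorial]
  | succ n ih =>
    have h3 := rf_pos (11/6) (by norm_num) n
    have h2 := rf_pos (2/3) (by norm_num) n
    rw [wzE_succ_left, rf_succ, rf_succ, pow_succ]
    have hE : wzE n 0 = 9 / 10 * ((1/4 : ℝ) ^ n * risingFactorial (2/3) n / risingFactorial (11/6) n)
        * ((2/3 + 2 * n) * (5/3 + 2 * n)) := by
      rw [← ih]; field_simp
    rw [hE]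
    push_cast
    field_simp
    ring

theorem stmt_18 :
    10 * Real.pi / Real.sqrt 3 =
      ∑' k : ℕ, (1/4 : ℝ) ^ k * (risingFactorial (2/3) k) /
        (risingFactorial (11/6) k) * ((27 * (k:ℝ)^2 + 42 * (k:ℝ) + 17) / (((k:ℝ) + 1) * (3 * (k:ℝ) + 1))) := by
  have h := hasSum_A.mul_left 10
  rw [mul_div_assoc, ← h.tsum_eq]
  refine tsum_congr fun n => ?_
  have e := E_eq n
  have : wzA n 0 = wzE n 0 / ((2/3 + 2 * n) * (5/3 + 2 * n)) *
      ((17/9 + 14/3 * (n:ℝ) + 3 * (n:ℝ)^2) / ((3 * (n:ℝ) + 1) * ((n:ℝ) + 1))) := by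
    unfold wzA
    push_cast
    field_simp
    ring
  rw [this, e]
  field_simp
  ring
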